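/- Let d ≥ 2 and let g : ℕ → GL(d,ℝ) have bounded steps; for each n ∈ ℕ fix a singular value decomposition g(n) = k(n)·diag(α(n))·k'(n). Assume that for every index i ∈ Fin d with i ≠ 0, the sequence n ↦ log(α(n) 0) − log(α(n) i) is CLI. Then there exists B > 0 such that for all n, m ∈ ℕ and every index i ∈ Fin d with i ≠ 0, the (i,0) entry of the orthogonal matrix H := k(n)⁻¹·k(n+m) satisfies |H_{i,0}| · (α(n) 0 / α(n) i) ≤ B. -/

import Mathlib

open Matrix

/-- The operator norm of a `d × d` real matrix acting on Euclidean `ℝ^d`. -/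
noncomputable def opNorm {d : ℕ} (M : Matrix (Fin d) (Fin d) ℝ) : ℝ :=
  ‖LinearMap.toContinuousLinearMap (Matrix.toEuclideanLin M)‖

/-- `IsSVD g k α k'` means `g = k · diag(α) · k'` is a singular value decomposition:
`k, k'` are orthogonal and `α` is positive and nonincreasing. -/
def IsSVD {d : ℕ} (g k : Matrix (Fin d) (Fin d) ℝ) (α : Fin d → ℝ)
    (k' : Matrix (Fin d) (Fin d) ℝ) : Prop :=
  k * kᵀ = 1 ∧ k' * k'ᵀ = 1 ∧ (∀ i, 0 < α i) ∧ Antitone α ∧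
    g = k * Matrix.diagonal α * k'

/-- A sequence of matrices has bounded steps if consecutive quotients are uniformly
bounded (in operator norm) together with their inverses. -/
noncomputable def HasBoundedSteps {d : ℕ} (g : ℕ → Matrix (Fin d) (Fin d) ℝ) : Prop :=
  ∃ r₀ : ℝ, 1 ≤ r₀ ∧ ∀ n : ℕ,
    opNorm ((g n)⁻¹ * g (n + 1)) ≤ r₀ ∧ opNorm ((g (n + 1))⁻¹ * g n) ≤ r₀

/-- A real sequence has coarsely linear increments (is CLI). -/
def IsCLI (x : ℕ → ℝ) : Prop :=
  ∃ κ κ' κ'' κ''' : ℝ, 0 < κ ∧ 0 < κ' ∧ 0 < κ'' ∧ 0 < κ''' ∧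
    ∀ n m : ℕ, κ * m - κ' ≤ x (n + m) - x n ∧ x (n + m) - x n ≤ κ'' * m + κ'''

/-!
Fix `N`, write `H = k(n)⁻¹ k(n + 1)` and let `v(n)` be the top column of `k(n)⁻¹ k(N)`, so that
`v(n) = H v(n + 1)` and `v(N)` is the first basis vector. Bounded steps give
`|H a b| α(n + 1) b ≤ r α(n) a` and `α(n) 0 ≤ r α(n + 1) 0`. The bound of `|v(n) i|` by a constant
times `α(n) i / α(n) 0` goes by strong induction on `i`. Since `H` is orthogonal, the Euclidean norm
of the coordinates of index at least `i` grows from `v(n + 1)` to `v(n)` only through the entries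
`H a b` with `b < i ≤ a`, and by the induction hypothesis these contribute at most a constant times
`α(n) i / α(n) 0`. This norm vanishes at time `N` when `i ≠ 0`, so at time `n` it is at most a
constant times the sum of `α(j) i / α(j) 0` over `n ≤ j < N`, and the CLI assumption dominates this
sum by a geometric series with first term comparable to `α(n) i / α(n) 0`.
-/

open scoped Matrix.Norms.L2Operator

/-- A real sequence is lower CLI if its increments are coarsely bounded below by a linear
function of positive slope. -/
def IsLowerCLI (x : ℕ → ℝ) : Prop :=
  ∃ κ κ' : ℝ, 0 < κ ∧ 0 < κ' ∧ ∀ n m : ℕ, κ * m - κ' ≤ x (n + m) - x n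

theorem IsCLI.isLowerCLI {x : ℕ → ℝ} (hx : IsCLI x) : IsLowerCLI x :=
  let ⟨κ, κ', _, _, hκ, hκ', _, _, h⟩ := hx
  ⟨κ, κ', hκ, hκ', fun n m => (h n m).1⟩

theorem IsLowerCLI.exists_sum_exp_neg_le {x : ℕ → ℝ} (hx : IsLowerCLI x) :
    ∃ C : ℝ, ∀ n m : ℕ, ∑ j ∈ Finset.range m, Real.exp (-x (n + j)) ≤ C * Real.exp (-x n) := by
  obtain ⟨κ, κ', hκ, -, h⟩ := hx
  have hρ : Real.exp (-κ) < 1 := by simpa using hκ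
  have hterm (n j : ℕ) :
      Real.exp (-x (n + j)) ≤ Real.exp κ' * Real.exp (-κ) ^ j * Real.exp (-x n) := by
    rw [← Real.exp_nat_mul, ← Real.exp_add, ← Real.exp_add]
    exact Real.exp_le_exp.mpr (by linarith [h n j])
  refine ⟨Real.exp κ' * (1 - Real.exp (-κ))⁻¹, fun n m => ?_⟩
  calc ∑ j ∈ Finset.range m, Real.exp (-x (n + j))
      ≤ ∑ j ∈ Finset.range m, Real.exp κ' * Real.exp (-κ) ^ j * Real.exp (-x n) :=
        Finset.sum_le_sum fun j _ => hterm n j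
    _ = Real.exp κ' * (∑ j ∈ Finset.range m, Real.exp (-κ) ^ j) * Real.exp (-x n) := by
        rw [Finset.mul_sum, Finset.sum_mul]
    _ ≤ Real.exp κ' * (1 - Real.exp (-κ))⁻¹ * Real.exp (-x n) := by
        gcongr
        simpa using geom_sum_Ico_le_of_lt_one (m := 0) (n := m) (Real.exp_nonneg _) hρ

section NormOn

variable {𝕜 ι : Type*} [RCLike 𝕜] [Fintype ι] {s : Set ι} {v : ι → 𝕜}

/-- The Euclidean norm of the part of the vector `v` supported on the coordinates in `s`. It
measures how far `v` is from the coordinate subspace spanned by the complement of `s`. -/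
noncomputable def normOn (s : Set ι) (v : ι → 𝕜) : ℝ :=
  ‖WithLp.toLp 2 (s.indicator v)‖

theorem normOn_add_le (s : Set ι) (v w : ι → 𝕜) : normOn s (v + w) ≤ normOn s v + normOn s w := by
  simpa only [normOn, Set.indicator_add', WithLp.toLp_add] using norm_add_le _ _

theorem normOn_eq_zero (h : ∀ i ∈ s, v i = 0) : normOn s v = 0 := by
  have hind : s.indicator v = 0 := funext fun i => Set.indicator_apply_eq_zero.mpr (h i)
  rw [normOn, hind, WithLp.toLp_zero, norm_zero]

theorem norm_apply_le_normOn {i : ι} (hi : i ∈ s) (v : ι → 𝕜) : ‖v i‖ ≤ normOn s v := by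
  simpa only [normOn, Set.indicator_of_mem hi] using
    PiLp.norm_apply_le (WithLp.toLp 2 (s.indicator v)) i

theorem normOn_le_norm_toLp (s : Set ι) (v : ι → 𝕜) : normOn s v ≤ ‖WithLp.toLp 2 v‖ := by
  rw [normOn, EuclideanSpace.norm_eq, EuclideanSpace.norm_eq]
  gcongr with i
  exact norm_indicator_le_norm_self v i

theorem normOn_le_card_mul {D : ℝ} (hD : 0 ≤ D) (h : ∀ i ∈ s, ‖v i‖ ≤ D) :
    normOn s v ≤ Fintype.card ι * D := by
  classical
  have hsum : WithLp.toLp 2 (s.indicator v) =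
      ∑ i, EuclideanSpace.single i (s.indicator v i) := by
    ext j
    simp
  calc normOn s v ≤ ∑ i, ‖EuclideanSpace.single i (s.indicator v i)‖ := by
        rw [normOn, hsum]
        exact norm_sum_le _ _
    _ ≤ ∑ _i : ι, D := by
        gcongr with i
        by_cases hi : i ∈ s <;> simp [hi, hD, h]
    _ = Fintype.card ι * D := by simp

end NormOn

theorem norm_apply_le_l2_opNorm {𝕜 m n : Type*} [RCLike 𝕜] [Fintype m] [Fintype n]
    [DecidableEq n] (A : Matrix m n 𝕜) (i : m) (j : n) : ‖A i j‖ ≤ ‖A‖ := by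
  simpa using (PiLp.norm_apply_le _ i).trans
    (Matrix.l2_opNorm_mulVec A (EuclideanSpace.single j (1 : 𝕜)))

section UnitaryGroup

variable {𝕜 ι : Type*} [RCLike 𝕜] [Fintype ι] [DecidableEq ι]

theorem coe_inv_unitaryGroup (U : unitaryGroup ι 𝕜) : (U⁻¹).1 = U.1⁻¹ :=
  (inv_eq_right_inv (mem_unitaryGroup_iff.mp U.2)).symm

theorem norm_toLp_unitary_mulVec (U : unitaryGroup ι 𝕜) (v : ι → 𝕜) :
    ‖WithLp.toLp 2 (U.1 *ᵥ v)‖ = ‖WithLp.toLp 2 v‖ := by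
  have hU : toEuclideanCLM (n := ι) (𝕜 := 𝕜) U.1 ∈ unitary _ := Unitary.map_mem _ U.2
  rw [← toEuclideanCLM_toLp]
  exact ContinuousLinearMap.norm_map_of_mem_unitary hU _

/-- Splitting `v` into its parts on `s` and on `sᶜ`, only the block of `U` that maps the
coordinates outside `s` into `s` can increase `normOn s`. -/
theorem normOn_unitary_mulVec_le (U : unitaryGroup ι 𝕜) {s : Set ι} {v : ι → 𝕜} {D : ℝ}
    (hD : 0 ≤ D) (hblock : ∀ a ∈ s, ∀ b ∉ s, ‖U a b‖ * ‖v b‖ ≤ D) :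
    normOn s (U.1 *ᵥ v) ≤ normOn s v + Fintype.card ι ^ 2 * D := by
  have hinside : normOn s (U.1 *ᵥ s.indicator v) ≤ normOn s v :=
    (normOn_le_norm_toLp _ _).trans (norm_toLp_unitary_mulVec U _).le
  have houtside : normOn s (U.1 *ᵥ sᶜ.indicator v) ≤ Fintype.card ι * (Fintype.card ι * D) := by
    refine normOn_le_card_mul (by positivity) fun a ha => ?_
    calc ‖(U.1 *ᵥ sᶜ.indicator v) a‖ ≤ ∑ b, ‖U a b * sᶜ.indicator v b‖ := norm_sum_le _ _
      _ ≤ ∑ _b : ι, D := by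
          gcongr with b
          by_cases hb : b ∈ s
          · simpa [hb] using hD
          · simpa [hb] using hblock a ha b hb
      _ = Fintype.card ι * D := by simp
  calc normOn s (U.1 *ᵥ v)
      = normOn s (U.1 *ᵥ s.indicator v + U.1 *ᵥ sᶜ.indicator v) := by
        rw [← Matrix.mulVec_add, Set.indicator_self_add_compl]
    _ ≤ normOn s v + Fintype.card ι * (Fintype.card ι * D) :=
        (normOn_add_le _ _ _).trans (add_le_add hinside houtside)
    _ = normOn s v + Fintype.card ι ^ 2 * D := by ring

end UnitaryGroup

theorem norm_ofReal_of_antitone {ι : Type*} (𝕜 : Type*) [RCLike 𝕜] [Fintype ι] [Preorder ι]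
    {z : ι} (hz : IsBot z) {a : ι → ℝ} (hnonneg : ∀ i, 0 ≤ a i) (ha : Antitone a) :
    ‖fun i => (a i : 𝕜)‖ = a z := by
  refine le_antisymm ((pi_norm_le_iff_of_nonneg (hnonneg z)).mpr fun i => ?_) ?_
  · simpa [abs_of_nonneg (hnonneg i)] using ha (hz i)
  · simpa [abs_of_nonneg (hnonneg z)] using norm_le_pi_norm (fun i => (a i : 𝕜)) z

/-- `g = k · diag(α) · k'` is a singular value decomposition of a real or complex matrix: `k` and
`k'` are unitary, and `α` is positive and nonincreasing. -/
structure IsUnitarySVD {𝕜 ι : Type*} [RCLike 𝕜] [Fintype ι] [DecidableEq ι] [Preorder ι]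
    (g k : Matrix ι ι 𝕜) (α : ι → ℝ) (k' : Matrix ι ι 𝕜) : Prop where
  left_mem : k ∈ unitaryGroup ι 𝕜
  right_mem : k' ∈ unitaryGroup ι 𝕜
  pos (i : ι) : 0 < α i
  antitone : Antitone α
  eq_mul : g = k * diagonal (fun i => (α i : 𝕜)) * k'

theorem IsSVD.isUnitarySVD {d : ℕ} {g k k' : Matrix (Fin d) (Fin d) ℝ} {α : Fin d → ℝ}
    (h : IsSVD g k α k') : IsUnitarySVD g k α k' where
  left_mem := mem_unitaryGroup_iff.mpr h.1
  right_mem := mem_unitaryGroup_iff.mpr h.2.1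
  pos := h.2.2.1
  antitone := h.2.2.2.1
  eq_mul := h.2.2.2.2

namespace IsUnitarySVD

variable {𝕜 ι : Type*} [RCLike 𝕜] [Fintype ι] [DecidableEq ι] [Preorder ι]
  {g k k' g₁ k₁ k₁' g₂ k₂ k₂' : Matrix ι ι 𝕜} {α α₁ α₂ : ι → ℝ}

theorem isUnit_det (h : IsUnitarySVD g k α k') : IsUnit g.det := by
  have hdiag : IsUnit (∏ i, (α i : 𝕜)) :=
    (Finset.prod_ne_zero_iff.mpr fun i _ => RCLike.ofReal_ne_zero.mpr (h.pos i).ne').isUnit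
  rw [h.eq_mul, det_mul, det_mul, det_diagonal]
  exact ((UnitaryGroup.det_isUnit ⟨k, h.left_mem⟩).mul hdiag).mul
    (UnitaryGroup.det_isUnit ⟨k', h.right_mem⟩)

theorem l2_opNorm_eq (h : IsUnitarySVD g k α k') {z : ι} (hz : IsBot z) : ‖g‖ = α z := by
  rw [h.eq_mul, CStarRing.norm_mul_mem_unitary _ h.right_mem,
    CStarRing.norm_mem_unitary_mul _ h.left_mem, l2_opNorm_diagonal,
    norm_ofReal_of_antitone 𝕜 hz (fun i => (h.pos i).le) h.antitone]

theorem norm_inv_mul_apply_mul_le (h₁ : IsUnitarySVD g₁ k₁ α₁ k₁')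
    (h₂ : IsUnitarySVD g₂ k₂ α₂ k₂') (i j : ι) :
    ‖(k₁⁻¹ * k₂) i j‖ * α₂ j ≤ ‖g₁⁻¹ * g₂‖ * α₁ i := by
  have hquot : g₁ * (g₁⁻¹ * g₂) = g₂ := mul_nonsing_inv_cancel_left _ _ h₁.isUnit_det
  have hconj : k₁⁻¹ * k₂ * diagonal (fun i => (α₂ i : 𝕜)) =
      diagonal (fun i => (α₁ i : 𝕜)) * (k₁' * (g₁⁻¹ * g₂) * star k₂') := by
    have hk₁ : k₁⁻¹ * k₁ = 1 := nonsing_inv_mul _ (UnitaryGroup.det_isUnit ⟨k₁, h₁.left_mem⟩)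
    have hk₂' : k₂' * star k₂' = 1 := mem_unitaryGroup_iff.mp h₂.right_mem
    calc k₁⁻¹ * k₂ * diagonal (fun i => (α₂ i : 𝕜))
        = k₁⁻¹ * (k₂ * diagonal (fun i => (α₂ i : 𝕜)) * k₂') * star k₂' := by
          simp only [Matrix.mul_assoc, hk₂', Matrix.mul_one]
      _ = k₁⁻¹ * (g₁ * (g₁⁻¹ * g₂)) * star k₂' := by rw [hquot, ← h₂.eq_mul]
      _ = k₁⁻¹ * (k₁ * diagonal (fun i => (α₁ i : 𝕜)) * k₁' * (g₁⁻¹ * g₂)) * star k₂' := by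
          rw [← h₁.eq_mul]
      _ = diagonal (fun i => (α₁ i : 𝕜)) * (k₁' * (g₁⁻¹ * g₂) * star k₂') := by
          simp only [← Matrix.mul_assoc, hk₁, Matrix.one_mul]
  have hnorm : ‖k₁' * (g₁⁻¹ * g₂) * star k₂'‖ = ‖g₁⁻¹ * g₂‖ := by
    rw [CStarRing.norm_mul_mem_unitary _ (Unitary.star_mem h₂.right_mem),
      CStarRing.norm_mem_unitary_mul _ h₁.right_mem]
  have hentry := congrFun₂ hconj i j
  rw [mul_diagonal, diagonal_mul] at hentry
  calc ‖(k₁⁻¹ * k₂) i j‖ * α₂ j = ‖(k₁' * (g₁⁻¹ * g₂) * star k₂') i j‖ * α₁ i := by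
        rw [← RCLike.norm_of_nonneg (K := 𝕜) (h₂.pos j).le, ← norm_mul, hentry, norm_mul,
          RCLike.norm_of_nonneg (h₁.pos i).le, mul_comm]
    _ ≤ ‖g₁⁻¹ * g₂‖ * α₁ i := by
        rw [← hnorm]
        exact mul_le_mul_of_nonneg_right (norm_apply_le_l2_opNorm _ i j) (h₁.pos i).le

end IsUnitarySVD

section TransitionColumn

variable {𝕜 ι : Type*} [RCLike 𝕜] [Fintype ι] [DecidableEq ι]

/-- The column of index `z` of `k(n)⁻¹ k(n + m)`, that is, the coordinates in the frame `k(n)` of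
the vector of index `z` of the frame `k(n + m)`. -/
def transitionCol (k : ℕ → unitaryGroup ι 𝕜) (z : ι) (n m : ℕ) : ι → 𝕜 :=
  fun i => ((k n)⁻¹ * k (n + m)) i z

theorem transitionCol_zero (k : ℕ → unitaryGroup ι 𝕜) (z : ι) (n : ℕ) :
    transitionCol k z n 0 = Pi.single z 1 := by
  ext i
  simp [transitionCol, Matrix.one_apply, Pi.single_apply]

theorem transitionCol_succ (k : ℕ → unitaryGroup ι 𝕜) (z : ι) (n m : ℕ) :
    transitionCol k z n (m + 1) = ((k n)⁻¹ * k (n + 1)).1 *ᵥ transitionCol k z (n + 1) m := by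
  have hcocycle : (k n)⁻¹ * k (n + (m + 1)) =
      ((k n)⁻¹ * k (n + 1)) * ((k (n + 1))⁻¹ * k (n + 1 + m)) := by
    rw [add_right_comm, add_assoc]
    group
  ext i
  rw [transitionCol, hcocycle]
  rfl

theorem norm_transitionCol_le_one (k : ℕ → unitaryGroup ι 𝕜) (z : ι) (n m : ℕ) (i : ι) :
    ‖transitionCol k z n m i‖ ≤ 1 :=
  entry_norm_bound_of_unitary ((k n)⁻¹ * k (n + m)).2 i z

theorem normOn_transitionCol_le_sum {k : ℕ → unitaryGroup ι 𝕜} {z : ι} {c : ℕ → ℝ}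
    (hc : ∀ n, 0 ≤ c n) {s : Set ι} (hs : z ∉ s)
    (hblock : ∀ n m, ∀ a ∈ s, ∀ b ∉ s,
      ‖((k n)⁻¹ * k (n + 1)) a b‖ * ‖transitionCol k z (n + 1) m b‖ ≤ c n) (n m : ℕ) :
    normOn s (transitionCol k z n m) ≤
      Fintype.card ι ^ 2 * ∑ j ∈ Finset.range m, c (n + j) := by
  induction m generalizing n with
  | zero =>
    refine (normOn_eq_zero fun i hi => ?_).trans_le (by simp)
    rw [transitionCol_zero, Pi.single_eq_of_ne (ne_of_mem_of_not_mem hi hs)]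
  | succ m ih =>
    calc normOn s (transitionCol k z n (m + 1))
        ≤ normOn s (transitionCol k z (n + 1) m) + Fintype.card ι ^ 2 * c n := by
          rw [transitionCol_succ]
          exact normOn_unitary_mulVec_le _ (hc n) (hblock n m)
      _ ≤ Fintype.card ι ^ 2 * ∑ j ∈ Finset.range m, c (n + 1 + j) + Fintype.card ι ^ 2 * c n := by
          gcongr
          exact ih (n + 1)
      _ = Fintype.card ι ^ 2 * ∑ j ∈ Finset.range (m + 1), c (n + j) := by
          simp only [Finset.sum_range_succ', mul_add, add_assoc, add_comm 1, add_zero]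

end TransitionColumn

/-- The consequences of bounded steps for the frames `k(n)` and the singular values `α(n)` of a
sequence of singular value decompositions, with `z` the index of the largest singular value. -/
structure HasBoundedFrameSteps {𝕜 ι : Type*} [RCLike 𝕜] [Fintype ι] [LinearOrder ι]
    (k : ℕ → unitaryGroup ι 𝕜) (α : ℕ → ι → ℝ) (z : ι) (r : ℝ) : Prop where
  pos (n : ℕ) (i : ι) : 0 < α n i
  antitone (n : ℕ) : Antitone (α n)
  norm_apply_mul_le (n : ℕ) (i j : ι) : ‖((k n)⁻¹ * k (n + 1)) i j‖ * α (n + 1) j ≤ r * α n i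
  top_le (n : ℕ) : α n z ≤ r * α (n + 1) z

namespace HasBoundedFrameSteps

variable {𝕜 ι : Type*} [RCLike 𝕜] [Fintype ι] [LinearOrder ι]
  {k : ℕ → unitaryGroup ι 𝕜} {α : ℕ → ι → ℝ} {z i : ι} {r B : ℝ}

theorem of_isUnitarySVD (hz : IsBot z) {g k' : ℕ → Matrix ι ι 𝕜}
    (hsvd : ∀ n, IsUnitarySVD (g n) (k n).1 (α n) (k' n))
    (hr : ∀ n, ‖(g n)⁻¹ * g (n + 1)‖ ≤ r ∧ ‖(g (n + 1))⁻¹ * g n‖ ≤ r) :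
    HasBoundedFrameSteps k α z r where
  pos n := (hsvd n).pos
  antitone n := (hsvd n).antitone
  norm_apply_mul_le n i j := by
    rw [UnitaryGroup.mul_val, coe_inv_unitaryGroup]
    exact ((hsvd n).norm_inv_mul_apply_mul_le (hsvd (n + 1)) i j).trans
      (mul_le_mul_of_nonneg_right (hr n).1 ((hsvd n).pos i).le)
  top_le n :=
    calc α n z = ‖g (n + 1) * ((g (n + 1))⁻¹ * g n)‖ := by
          rw [mul_nonsing_inv_cancel_left _ _ (hsvd (n + 1)).isUnit_det, (hsvd n).l2_opNorm_eq hz]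
      _ ≤ ‖g (n + 1)‖ * ‖(g (n + 1))⁻¹ * g n‖ := l2_opNorm_mul _ _
      _ ≤ ‖g (n + 1)‖ * r := by
          gcongr
          exact (hr n).2
      _ = r * α (n + 1) z := by rw [(hsvd (n + 1)).l2_opNorm_eq hz, mul_comm]

theorem const_pos (h : HasBoundedFrameSteps k α z r) : 0 < r :=
  pos_of_mul_pos_left ((h.pos 0 z).trans_le (h.top_le 0)) (h.pos 1 z).le

theorem weight_ratio_pos (h : HasBoundedFrameSteps k α z r) (n : ℕ) (i : ι) :
    0 < α n i / α n z :=
  div_pos (h.pos n i) (h.pos n z)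

theorem norm_apply_mul_norm_transitionCol_le (h : HasBoundedFrameSteps k α z r) (hB : 0 ≤ B)
    {a b : ι} (hia : i ≤ a) (hb : ∀ n m, ‖transitionCol k z n m b‖ ≤ B * (α n b / α n z))
    (n m : ℕ) :
    ‖((k n)⁻¹ * k (n + 1)) a b‖ * ‖transitionCol k z (n + 1) m b‖ ≤
      r ^ 2 * B * (α n i / α n z) := by
  have hr := h.const_pos
  have hi := h.pos n i
  have hz := h.pos n z
  have hz' := h.pos (n + 1) z
  have hstep : ‖((k n)⁻¹ * k (n + 1)) a b‖ * α (n + 1) b ≤ r * α n i :=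
    (h.norm_apply_mul_le n a b).trans (by gcongr; exact h.antitone n hia)
  have htop : (α (n + 1) z)⁻¹ ≤ r * (α n z)⁻¹ := by
    rw [← div_eq_mul_inv, inv_le_iff_one_le_mul₀ hz', div_mul_eq_mul_div, one_le_div hz]
    exact h.top_le n
  calc ‖((k n)⁻¹ * k (n + 1)) a b‖ * ‖transitionCol k z (n + 1) m b‖
      ≤ ‖((k n)⁻¹ * k (n + 1)) a b‖ * (B * (α (n + 1) b / α (n + 1) z)) := by
        gcongr
        exact hb (n + 1) m
    _ = ‖((k n)⁻¹ * k (n + 1)) a b‖ * α (n + 1) b * (B * (α (n + 1) z)⁻¹) := by ring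
    _ ≤ r * α n i * (B * (r * (α n z)⁻¹)) :=
        mul_le_mul hstep (by gcongr) (by positivity) (by positivity)
    _ = r ^ 2 * B * (α n i / α n z) := by ring

theorem exists_norm_transitionCol_le_of_forall_lt (h : HasBoundedFrameSteps k α z r)
    (hzi : z < i) (hcli : IsLowerCLI fun n => Real.log (α n z) - Real.log (α n i)) (hB : 0 ≤ B)
    (hlt : ∀ b < i, ∀ n m, ‖transitionCol k z n m b‖ ≤ B * (α n b / α n z)) :
    ∃ B' : ℝ, ∀ n m, ‖transitionCol k z n m i‖ ≤ B' * (α n i / α n z) := by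
  have hratio (n : ℕ) : Real.exp (-(Real.log (α n z) - Real.log (α n i))) = α n i / α n z := by
    rw [neg_sub, Real.exp_sub, Real.exp_log (h.pos n i), Real.exp_log (h.pos n z)]
  obtain ⟨C, hC⟩ := hcli.exists_sum_exp_neg_le
  simp only [hratio] at hC
  have hblock (n m : ℕ) (a : ι) (ha : a ∈ Set.Ici i) (b : ι) (hb : b ∉ Set.Ici i) :
      ‖((k n)⁻¹ * k (n + 1)) a b‖ * ‖transitionCol k z (n + 1) m b‖ ≤
        r ^ 2 * B * (α n i / α n z) :=
    h.norm_apply_mul_norm_transitionCol_le hB ha (hlt b (not_le.mp hb)) n m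
  have hblock_nonneg (n : ℕ) : 0 ≤ r ^ 2 * B * (α n i / α n z) :=
    mul_nonneg (by positivity) (h.weight_ratio_pos n i).le
  refine ⟨Fintype.card ι ^ 2 * (r ^ 2 * B * C), fun n m => ?_⟩
  calc ‖transitionCol k z n m i‖ ≤ normOn (Set.Ici i) (transitionCol k z n m) :=
        norm_apply_le_normOn Set.self_mem_Ici _
    _ ≤ Fintype.card ι ^ 2 *
          ∑ j ∈ Finset.range m, r ^ 2 * B * (α (n + j) i / α (n + j) z) :=
        normOn_transitionCol_le_sum hblock_nonneg hzi.not_ge hblock n m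
    _ ≤ Fintype.card ι ^ 2 * (r ^ 2 * B * (C * (α n i / α n z))) := by
        rw [← Finset.mul_sum]
        gcongr
        exact hC n m
    _ = Fintype.card ι ^ 2 * (r ^ 2 * B * C) * (α n i / α n z) := by ring

theorem exists_norm_transitionCol_le (h : HasBoundedFrameSteps k α z r) (hz : IsBot z)
    (hcli : ∀ i ≠ z, IsLowerCLI fun n => Real.log (α n z) - Real.log (α n i)) (i : ι) :
    ∃ B : ℝ, ∀ n m, ‖transitionCol k z n m i‖ ≤ B * (α n i / α n z) := by
  induction i using WellFoundedLT.induction with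
  | ind i ih =>
    obtain rfl | hiz := eq_or_ne i z
    · refine ⟨1, fun n m => ?_⟩
      rw [div_self (h.pos n i).ne', mul_one]
      exact norm_transitionCol_le_one k i n m i
    choose B hB using ih
    obtain ⟨M, hM⟩ := Finite.bddAbove_range fun b : Set.Iio i => B b b.2
    refine h.exists_norm_transitionCol_le_of_forall_lt ((hz i).lt_of_ne' hiz) (hcli i hiz)
      (le_max_left 0 M) fun b hb n m => (hB b hb n m).trans ?_
    gcongr
    · exact (h.weight_ratio_pos n b).le
    · exact le_max_of_le_right (hM ⟨⟨b, hb⟩, rfl⟩)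

end HasBoundedFrameSteps

theorem stmt12_general {𝕜 ι : Type*} [RCLike 𝕜] [Fintype ι] [LinearOrder ι] {z : ι}
    (hz : IsBot z) {g k k' : ℕ → Matrix ι ι 𝕜} {α : ℕ → ι → ℝ}
    (hbd : ∃ r : ℝ, ∀ n, ‖(g n)⁻¹ * g (n + 1)‖ ≤ r ∧ ‖(g (n + 1))⁻¹ * g n‖ ≤ r)
    (hsvd : ∀ n, IsUnitarySVD (g n) (k n) (α n) (k' n))
    (hcli : ∀ i ≠ z, IsLowerCLI fun n => Real.log (α n z) - Real.log (α n i)) :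
    ∃ B : ℝ, 0 < B ∧ ∀ n m i, ‖((k n)⁻¹ * k (n + m)) i z‖ * (α n z / α n i) ≤ B := by
  obtain ⟨r, hr⟩ := hbd
  lift k to ℕ → unitaryGroup ι 𝕜 using fun n => (hsvd n).left_mem
  have hsteps := HasBoundedFrameSteps.of_isUnitarySVD hz hsvd hr
  choose B hB using hsteps.exists_norm_transitionCol_le hz hcli
  obtain ⟨M, hM⟩ := Finite.bddAbove_range B
  refine ⟨max 1 M, by positivity, fun n m i => ?_⟩
  have hBi : B i ≤ max 1 M := le_max_of_le_right (hM ⟨i, rfl⟩)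
  have hratio := hsteps.weight_ratio_pos n i
  rw [← coe_inv_unitaryGroup, ← inv_div, mul_inv_le_iff₀ hratio]
  exact (hB i n m).trans (mul_le_mul_of_nonneg_right hBi hratio.le)

/-- If, along a bounded-step sequence `g(n) = k(n)·diag(α(n))·k'(n)`, the top singular
value gaps `log(α(n) 0) − log(α(n) i)` are CLI, then the entries
`(k(n)⁻¹ k(n+m))_{i,0} · α(n) 0/α(n) i` are uniformly bounded. -/
theorem stmt12 (d : ℕ) (hd : 2 ≤ d) (g : ℕ → Matrix (Fin d) (Fin d) ℝ)
    (hbd : HasBoundedSteps g)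
    (k : ℕ → Matrix (Fin d) (Fin d) ℝ) (α : ℕ → Fin d → ℝ)
    (k' : ℕ → Matrix (Fin d) (Fin d) ℝ)
    (hsvd : ∀ n : ℕ, IsSVD (g n) (k n) (α n) (k' n))
    (hcli : ∀ i : Fin d, i ≠ ⟨0, by omega⟩ →
      IsCLI fun n => Real.log (α n ⟨0, by omega⟩) - Real.log (α n i)) :
    ∃ B : ℝ, 0 < B ∧ ∀ (n m : ℕ) (i : Fin d), i ≠ ⟨0, by omega⟩ →
      |((k n)⁻¹ * k (n + m)) i ⟨0, by omega⟩| * (α n ⟨0, by omega⟩ / α n i) ≤ B := by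
  obtain ⟨r, -, hr⟩ := hbd
  obtain ⟨B, hB, hle⟩ := stmt12_general (z := (⟨0, by omega⟩ : Fin d)) (fun i => Nat.zero_le i)
    ⟨r, hr⟩ (fun n => (hsvd n).isUnitarySVD) fun i hi => (hcli i hi).isLowerCLI
  exact ⟨B, hB, fun n m i _ => hle n m i⟩
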